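/- The number of all alternating ordered rooted labeled trees on n+1 vertices (of both types) equals 2·n^n, and the two types have equal cardinalities. -/

import Mathlib

/-- Ordered (plane) rooted trees with natural-number labels. -/
inductive LTree : Type
  | node : ℕ → List LTree → LTree

namespace LTree

/-- The list of labels of a labeled ordered rooted tree (root first, depth-first). -/
def labels : LTree → List ℕ
  | .node a ts => a :: (ts.attach.map (fun x => labels x.1)).flatten
decreasing_by
  have := List.sizeOf_lt_of_mem x.2
  simp_wf
  omega

/-- `altFrom a d t` : the labels alternate along every path down `t`, where `a`
is the label of the parent of the root of `t`; if `d = true` the root label must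
be smaller than `a` (a descent), otherwise larger (an ascent). -/
def altFrom : ℕ → Bool → LTree → Prop
  | a, d, .node c ts =>
      (if d then c < a else a < c) ∧ ∀ x ∈ ts.attach, altFrom c (!d) x.1
termination_by _ _ t => sizeOf t
decreasing_by
  have := List.sizeOf_lt_of_mem x.2
  simp_wf
  omega

/-- Alternating of type I: along every path from the root the labels satisfy
`x₁ > x₂ < x₃ > x₄ < …`. -/
def AltI : LTree → Prop
  | .node a ts => ∀ t ∈ ts, altFrom a true t

/-- Alternating of type II: `x₁ < x₂ > x₃ < …`. -/
def AltII : LTree → Prop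
  | .node a ts => ∀ t ∈ ts, altFrom a false t

/-- A labeled ordered rooted tree on `n+1` vertices, labeled bijectively by `{1,…,n+1}`. -/
def Valid (n : ℕ) (t : LTree) : Prop :=
  t.labels.Nodup ∧ t.labels.length = n + 1 ∧ ∀ a ∈ t.labels, a ∈ Finset.Icc 1 (n + 1)

end LTree

/-!
Remove from an alternating plane forest on `S` its extremal vertex `m`, which must lie on an even
level, together with its descendants. The descendants form a forest alternating for the converse
order, the rest is an arbitrary alternating forest, and since `m` is extremal it can be put back in
every slot on an even level. A forest `g` has `#g + 1` such slots; if the result is to be a tree,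
then `g` is empty or a tree, and a nonempty tree `g` has `#g - 1` of them. With `(n + 1) ^ (n - 1)`
forests on `n` labels, both recursions are Abel's identity
`∑ₖ (n.choose k) * x * (x + k) ^ (k - 1) * (y + n - k) ^ (n - k) = (x + y + n) ^ n` at `x = 1`,
with `y = 1` for forests and `y = -1` for trees.
-/

open Finset Function

section Abel

variable {R : Type*} [CommRing R]

/-- The Abel polynomial `x * (x + n) ^ (n - 1)`, read as `1` for `n = 0`. -/
def abelPoly (x : R) : ℕ → R
  | 0 => 1
  | n + 1 => x * (x + (n + 1 : ℕ)) ^ n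

theorem abelPoly_mul_pow (x : R) {n k : ℕ} (hk : k ≤ n + 1) :
    abelPoly x k * (x + k) ^ (n + 1 - k) = x * (x + k) ^ n := by
  cases k with
  | zero => simp [abelPoly, pow_succ']
  | succ k =>
    rw [abelPoly, mul_assoc, ← pow_add]
    congr 2
    omega

theorem sum_choose_mul_neg_one_pow_mul_add_pow (x : R) (n : ℕ) :
    ∑ k ∈ range (n + 2), ((n + 1).choose k : R) * (-1) ^ (n + 1 - k) * (x + k) ^ n = 0 := by
  have h := fwdDiff_iter_eq_sum_shift (1 : R) (· ^ n) (n + 1) x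
  rw [fwdDiff_iter_pow_eq_zero_of_lt n.lt_succ_self, Pi.zero_apply] at h
  rw [h]
  refine sum_congr rfl fun k _ => ?_
  simp [mul_comm]

theorem sum_choose_mul_abelPoly_mul_neg_pow (x : R) (n : ℕ) :
    ∑ k ∈ range (n + 1), (n.choose k : R) * abelPoly x k * (-(x + k)) ^ (n - k) =
      if n = 0 then 1 else 0 := by
  cases n with
  | zero => simp [abelPoly]
  | succ n =>
    rw [if_neg n.succ_ne_zero, ← mul_zero x, ← sum_choose_mul_neg_one_pow_mul_add_pow x n, mul_sum]
    refine sum_congr rfl fun k hk => ?_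
    rw [neg_pow]
    linear_combination ((n + 1).choose k : R) * (-1) ^ (n + 1 - k) *
      abelPoly_mul_pow x (mem_range_succ_iff.1 hk)

theorem choose_mul_choose_sub_comm (n k j : ℕ) :
    n.choose k * (n - k).choose j = n.choose j * (n - j).choose k := by
  have hk := Nat.choose_mul (n := n) (Nat.le_add_right k j)
  have hj := Nat.choose_mul (n := n) (Nat.le_add_left j k)
  rw [Nat.add_sub_cancel_left] at hk
  rw [Nat.add_sub_cancel_right] at hj
  rw [← hk, ← hj, Nat.choose_symm_add]

/-- Abel's binomial identity. -/
theorem sum_choose_mul_abelPoly_mul_add_pow (x y : R) (n : ℕ) :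
    ∑ k ∈ range (n + 1), (n.choose k : R) * (abelPoly x k * (y + (n - k : ℕ)) ^ (n - k)) =
      (x + y + n) ^ n := by
  have expand : ∀ k ∈ range (n + 1),
      (n.choose k : R) * (abelPoly x k * (y + (n - k : ℕ)) ^ (n - k)) =
        ∑ j ∈ range (n - k + 1), (x + y + n) ^ j * n.choose j *
          ((n - j).choose k * abelPoly x k * (-(x + k)) ^ (n - j - k)) := by
    intro k hk
    have hy : y + (n - k : ℕ) = (x + y + n) + -(x + k) := by
      rw [Nat.cast_sub (mem_range_succ_iff.1 hk)]
      ring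
    rw [hy, add_pow, mul_sum, mul_sum]
    refine sum_congr rfl fun j _ => ?_
    have hchoose := congrArg (Nat.cast (R := R)) (choose_mul_choose_sub_comm n k j)
    push_cast at hchoose
    rw [Nat.sub_right_comm n j k]
    linear_combination abelPoly x k * (x + y + n) ^ j * (-(x + k)) ^ (n - k - j) * hchoose
  calc _ = ∑ k ∈ range (n + 1), ∑ j ∈ range (n - k + 1), _ := sum_congr rfl expand
    _ = ∑ j ∈ range (n + 1), ∑ k ∈ range (n - j + 1), (x + y + n) ^ j * n.choose j *
          ((n - j).choose k * abelPoly x k * (-(x + k)) ^ (n - j - k)) :=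
      sum_comm' fun k j => by simp only [mem_range]; omega
    _ = ∑ j ∈ range (n + 1), (x + y + n) ^ j * n.choose j * if n - j = 0 then 1 else 0 := by
      simp only [← mul_sum, sum_choose_mul_abelPoly_mul_neg_pow]
    _ = (x + y + n) ^ n := by
      rw [sum_range_succ, sum_eq_zero fun j hj => ?_]
      · simp
      · rw [if_neg (Nat.sub_ne_zero_of_lt (mem_range.1 hj)), mul_zero]

theorem sum_powerset_abelPoly_mul_add_pow {ι : Type*} [DecidableEq ι] (x y : R) (A : Finset ι) :
    ∑ T ∈ A.powerset, abelPoly x #T * (y + (#(A \ T) : R)) ^ #(A \ T) = (x + y + #A) ^ #A := by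
  rw [← sum_choose_mul_abelPoly_mul_add_pow]
  simp only [← nsmul_eq_mul]
  rw [← sum_powerset_apply_card fun k => abelPoly x k * (y + (#A - k : ℕ)) ^ (#A - k)]
  refine sum_congr rfl fun T hT => ?_
  rw [card_sdiff_of_subset (mem_powerset.1 hT)]

end Abel

/-- Plane forests with labeled vertices, in first-child/next-sibling form: a nonempty forest is the
label of its leftmost root, the forest of that root's children, and the forest of the remaining
trees. In this form forests are a plain inductive type, while `LTree` is nested through `List`. -/
inductive PlaneForest (α : Type*) : Type _
  | nil : PlaneForest α
  | cons : α → PlaneForest α → PlaneForest α → PlaneForest α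

namespace PlaneForest

variable {α : Type*}

/-- The relation `r` or its converse; it lets one induction treat even and odd levels together. -/
def orient (r : α → α → Prop) (p : Bool) : α → α → Prop :=
  if p then r else swap r

theorem orient_swap_not (r : α → α → Prop) (p : Bool) :
    orient (swap r) (!p) = orient r p := by
  cases p <;> rfl

theorem swap_orient (r : α → α → Prop) (p : Bool) :
    swap (orient r p) = orient r (!p) := by
  cases p <;> rfl

instance isStrictTotalOrder_orient (r : α → α → Prop) [IsStrictTotalOrder α r]
    (p : Bool) : IsStrictTotalOrder α (orient r p) := by
  cases p
  · exact inferInstanceAs (IsStrictTotalOrder α (swap r))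
  · exact inferInstanceAs (IsStrictTotalOrder α r)

/-- The multiset of all labels of a forest. -/
def labels : PlaneForest α → Multiset α
  | nil => 0
  | cons a c s => a ::ₘ (labels c + labels s)

/-- The labels of the roots of a forest, from left to right. -/
def roots : PlaneForest α → List α
  | nil => []
  | cons a _ s => a :: roots s

/-- Alternating forests: `r x a` whenever `x` is the label of a child of a root labeled `a`, and
from each level to the next the relation is replaced by its converse. -/
def IsAlternating : (α → α → Prop) → PlaneForest α → Prop
  | _, nil => True
  | r, cons a c s => (∀ x ∈ roots c, r x a) ∧ IsAlternating (swap r) c ∧ IsAlternating r s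

theorem roots_eq_nil {f : PlaneForest α} : f.roots = [] ↔ f = nil := by
  cases f <;> simp [roots]

theorem mem_labels_of_mem_roots {f : PlaneForest α} {x : α} (h : x ∈ f.roots) : x ∈ f.labels := by
  induction f with
  | nil => cases h
  | cons a c s _ ihs =>
    rw [labels, Multiset.mem_cons, Multiset.mem_add]
    exact (List.mem_cons.1 h).imp_right fun hs => Or.inr (ihs hs)

theorem labels_eq_zero {f : PlaneForest α} : f.labels = 0 ↔ f = nil := by
  cases f <;> simp [labels]

theorem finite_setOf_labels_le (M : Multiset α) : {f : PlaneForest α | f.labels ≤ M}.Finite := by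
  classical
  induction M using Multiset.strongInductionOn with
  | _ M ih =>
    have hfin : (insert nil (⋃ a ∈ M.toFinset, Set.image2 (cons a)
        {c | c.labels ≤ M.erase a} {s | s.labels ≤ M.erase a})).Finite :=
      (M.toFinset.finite_toSet.biUnion fun a ha =>
        have h := ih _ (Multiset.erase_lt.2 (Multiset.mem_toFinset.1 ha))
        h.image2 _ h).insert _
    refine hfin.subset fun f hf => ?_
    cases f with
    | nil => exact Set.mem_insert _ _
    | cons a c s =>
      have ha : a ∈ M := Multiset.mem_of_le hf (Multiset.mem_cons_self _ _)
      have hcs : c.labels + s.labels ≤ M.erase a := by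
        simpa [labels] using Multiset.erase_le_erase a hf
      exact Or.inr (Set.mem_biUnion (Multiset.mem_toFinset.2 ha)
        ⟨c, (Multiset.le_add_right _ _).trans hcs, s, (Multiset.le_add_left _ _).trans hcs, rfl⟩)

section Insertion

variable {m : α} {C f g : PlaneForest α} {p : Bool} {r : α → α → Prop}

open scoped Classical in
/-- All forests obtained from `g` by inserting a vertex `m` with descendants `C` on one of the
levels of parity `p`, where `true` is the parity of the root level. -/
noncomputable def insertions (m : α) (C : PlaneForest α) :
    Bool → PlaneForest α → Finset (PlaneForest α)
  | p, nil => if p then {cons m C nil} else ∅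
  | p, cons a c s => (if p then {cons m C (cons a c s)} else ∅) ∪
      ((insertions m C (!p) c).image (cons a · s) ∪ (insertions m C p s).image (cons a c))

theorem mem_insertions_nil : f ∈ insertions m C p nil ↔ p = true ∧ f = cons m C nil := by
  cases p <;> simp [insertions]

theorem mem_insertions_cons {a : α} {c s : PlaneForest α} :
    f ∈ insertions m C p (cons a c s) ↔ (p = true ∧ f = cons m C (cons a c s)) ∨
      (∃ c' ∈ insertions m C (!p) c, cons a c' s = f) ∨
      ∃ s' ∈ insertions m C p s, cons a c s' = f := by
  cases p <;> simp [insertions]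

theorem cons_mem_insertions : cons m C g ∈ insertions m C true g := by
  cases g <;> simp [insertions]

theorem labels_of_mem_insertions (hf : f ∈ insertions m C p g) :
    f.labels = m ::ₘ (C.labels + g.labels) := by
  induction g generalizing f p with
  | nil =>
    obtain ⟨-, rfl⟩ := mem_insertions_nil.1 hf
    rfl
  | cons a c s ihc ihs =>
    obtain ⟨-, rfl⟩ | ⟨c', hc', rfl⟩ | ⟨s', hs', rfl⟩ := mem_insertions_cons.1 hf
    · rfl
    · simp only [labels, ihc hc', ← Multiset.singleton_add]
      abel
    · simp only [labels, ihs hs', ← Multiset.singleton_add]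
      abel

theorem mem_labels_of_mem_insertions (hf : f ∈ insertions m C p g) : m ∈ f.labels := by
  rw [labels_of_mem_insertions hf]
  exact Multiset.mem_cons_self _ _

theorem forall_mem_roots_iff_of_mem_insertions {P : α → Prop} (hf : f ∈ insertions m C p g)
    (hP : p = true → P m) : (∀ x ∈ f.roots, P x) ↔ ∀ x ∈ g.roots, P x := by
  induction g generalizing f with
  | nil =>
    obtain ⟨hp, rfl⟩ := mem_insertions_nil.1 hf
    simp [roots, hP hp]
  | cons a c s _ ihs =>
    obtain ⟨hp, rfl⟩ | ⟨c', -, rfl⟩ | ⟨s', hs', rfl⟩ := mem_insertions_cons.1 hf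
    · simp [roots, hP hp]
    · rfl
    · simp only [roots, List.forall_mem_cons, ihs hs']

theorem isAlternating_cons_iff_of_forall_labels (hC : ∀ x ∈ C.labels, r x m) :
    (cons m C g).IsAlternating r ↔ C.IsAlternating (swap r) ∧ g.IsAlternating r :=
  and_iff_right fun x hx => hC x (mem_labels_of_mem_roots hx)

theorem isAlternating_iff_of_mem_insertions (hf : f ∈ insertions m C p g)
    (hg : ∀ x ∈ g.labels, orient r p x m) (hC : ∀ x ∈ C.labels, orient r p x m) :
    f.IsAlternating r ↔ C.IsAlternating (swap (orient r p)) ∧ g.IsAlternating r := by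
  induction g generalizing f r p with
  | nil =>
    obtain ⟨rfl, rfl⟩ := mem_insertions_nil.1 hf
    exact isAlternating_cons_iff_of_forall_labels hC
  | cons a c s ihc ihs =>
    simp only [labels, Multiset.mem_cons, Multiset.mem_add, or_imp, forall_and,
      forall_eq] at hg
    obtain ⟨hga, hgc, hgs⟩ := hg
    obtain ⟨rfl, rfl⟩ | ⟨c', hc', rfl⟩ | ⟨s', hs', rfl⟩ := mem_insertions_cons.1 hf
    · exact isAlternating_cons_iff_of_forall_labels hC
    · have hroots : (∀ x ∈ c'.roots, r x a) ↔ ∀ x ∈ c.roots, r x a :=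
        forall_mem_roots_iff_of_mem_insertions hc' fun hp => by
          rw [Bool.not_eq_true'] at hp
          subst hp
          exact hga
      rw [← orient_swap_not] at hgc hC ⊢
      simp only [IsAlternating, hroots, ihc hc' hgc hC]
      tauto
    · simp only [IsAlternating, ihs hs' hgs hC]
      tauto

theorem card_insertions (hm : m ∉ g.labels) :
    #(insertions m C p g) = g.labels.card + if p then 1 else 0 := by
  classical
  induction g generalizing p with
  | nil => cases p <;> simp [insertions, labels]
  | cons a c s ihc ihs =>
    simp only [labels, Multiset.mem_cons, Multiset.mem_add, not_or] at hm
    obtain ⟨hma, hmc, hms⟩ := hm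
    have himages : Disjoint ((insertions m C (!p) c).image (cons a · s))
        ((insertions m C p s).image (cons a c)) := by
      refine disjoint_left.2 fun f hc hs => ?_
      obtain ⟨c', -, rfl⟩ := mem_image.1 hc
      obtain ⟨s', hs', h⟩ := mem_image.1 hs
      rw [cons.injEq] at h
      exact hms (h.2.2 ▸ mem_labels_of_mem_insertions hs')
    have hroot : Disjoint (if p then {cons m C (cons a c s)} else ∅)
        ((insertions m C (!p) c).image (cons a · s) ∪ (insertions m C p s).image (cons a c)) := by
      refine disjoint_left.2 fun f hf hfu => ?_
      obtain rfl : f = cons m C (cons a c s) := by cases p <;> simp_all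
      simp [Ne.symm hma] at hfu
    rw [insertions, card_union_of_disjoint hroot, card_union_of_disjoint himages,
      card_image_of_injective _ fun c₁ c₂ h => (cons.inj h).2.1,
      card_image_of_injective _ fun s₁ s₂ h => (cons.inj h).2.2, ihc hmc, ihs hms]
    cases p <;> simp [labels] <;> omega

end Insertion

section Removal

variable [DecidableEq α] {m : α} {C f g : PlaneForest α} {p : Bool} {r : α → α → Prop}

/-- The forest of proper descendants of the first vertex labeled `m`; `nil` if there is none. -/
def descendants (m : α) : PlaneForest α → PlaneForest α
  | nil => nil
  | cons a c s =>
    if m = a then c else if m ∈ c.labels then descendants m c else descendants m s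

/-- The forest with the first vertex labeled `m` removed together with its descendants. -/
def prune (m : α) : PlaneForest α → PlaneForest α
  | nil => nil
  | cons a c s =>
    if m = a then s else if m ∈ c.labels then cons a (prune m c) s else cons a c (prune m s)

theorem descendants_eq_and_prune_eq_of_mem_insertions (hf : f ∈ insertions m C p g)
    (hm : m ∉ g.labels) : descendants m f = C ∧ prune m f = g := by
  induction g generalizing f p with
  | nil =>
    obtain ⟨-, rfl⟩ := mem_insertions_nil.1 hf
    simp [descendants, prune]
  | cons a c s ihc ihs =>
    simp only [labels, Multiset.mem_cons, Multiset.mem_add, not_or] at hm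
    obtain ⟨hma, hmc, hms⟩ := hm
    obtain ⟨-, rfl⟩ | ⟨c', hc', rfl⟩ | ⟨s', hs', rfl⟩ := mem_insertions_cons.1 hf
    · simp [descendants, prune]
    · simp [descendants, prune, hma, mem_labels_of_mem_insertions hc', ihc hc' hmc]
    · simp [descendants, prune, hma, hmc, ihs hs' hms]

/- A vertex that is extremal for `orient r p` cannot lie on a level of the other parity: there it
would have to be a root, since its parent would be more extremal. -/
theorem mem_insertions_descendants_prune [Std.Asymm r] (hm : m ∈ f.labels)
    (hmax : ∀ x ∈ f.labels, x ≠ m → orient r p x m) (hf : f.IsAlternating r)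
    (hroot : p = false → m ∉ f.roots) : f ∈ insertions m (descendants m f) p (prune m f) := by
  induction f generalizing r p with
  | nil => cases hm
  | cons a c s ihc ihs =>
    simp only [labels, Multiset.mem_cons, Multiset.mem_add, or_imp, forall_and,
      forall_eq] at hm hmax
    obtain ⟨hmaxa, hmaxc, hmaxs⟩ := hmax
    obtain ⟨hfa, hfc, hfs⟩ := hf
    by_cases hma : m = a
    · subst hma
      have hp : p = true := by_contra fun hp =>
        hroot (Bool.not_eq_true _ ▸ hp) List.mem_cons_self
      rw [hp]
      simpa only [descendants, prune, if_true] using cons_mem_insertions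
    by_cases hmc : m ∈ c.labels
    · have hrootc : (!p) = false → m ∉ c.roots := fun hp hmr => by
        rw [Bool.not_eq_false'] at hp
        subst hp
        exact asymm (hfa m hmr) (hmaxa (Ne.symm hma))
      rw [← orient_swap_not] at hmaxc
      have hmem := ihc hmc hmaxc hfc hrootc
      simp only [descendants, prune, hma, hmc, if_true, if_false]
      exact mem_insertions_cons.2 (.inr (.inl ⟨c, hmem, rfl⟩))
    · have hms : m ∈ s.labels := hm.resolve_left hma |>.resolve_left hmc
      have hmem := ihs hms hmaxs hfs fun hp hmr => hroot hp (List.mem_cons_of_mem a hmr)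
      simp only [descendants, prune, hma, hmc, if_false]
      exact mem_insertions_cons.2 (.inr (.inr ⟨s, hmem, rfl⟩))

end Removal

section Counting

variable {r : α → α → Prop} {S : Finset α} {C f g : PlaneForest α} {m : α}

/-- The alternating forests whose vertices are labeled bijectively by `S`. -/
noncomputable def alternatingForests (r : α → α → Prop) (S : Finset α) : Finset (PlaneForest α) :=
  Set.Finite.toFinset (s := {f | f.labels = S.val ∧ f.IsAlternating r})
    ((finite_setOf_labels_le S.val).subset fun _ hf => hf.1.le)

theorem mem_alternatingForests :
    f ∈ alternatingForests r S ↔ f.labels = S.val ∧ f.IsAlternating r :=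
  Set.Finite.mem_toFinset _

theorem card_labels_of_mem_alternatingForests (hf : f ∈ alternatingForests r S) :
    f.labels.card = #S :=
  congrArg Multiset.card (mem_alternatingForests.1 hf).1

theorem notMem_labels_of_mem_alternatingForests (hm : m ∉ S) (hf : f ∈ alternatingForests r S) :
    m ∉ f.labels := by
  rwa [(mem_alternatingForests.1 hf).1, mem_val]

theorem alternatingForests_empty : alternatingForests r ∅ = {nil} := by
  ext f
  rw [mem_alternatingForests, empty_val, labels_eq_zero, mem_singleton]
  exact and_iff_left_of_imp fun hf => hf ▸ trivial

theorem exists_mem_forall_rel [IsStrictTotalOrder α r] (hS : S.Nonempty) :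
    ∃ m ∈ S, ∀ x ∈ S, x ≠ m → r x m := by
  classical
  let := linearOrderOfSTO r
  exact ⟨S.max' hS, S.max'_mem hS, fun x hx hne => lt_of_le_of_ne (S.le_max' x hx) hne⟩

section Recursion

variable [DecidableEq α]

theorem add_eq_val_iff {A B : Multiset α} :
    A + B = S.val ↔ ∃ T ⊆ S, A = T.val ∧ B = (S \ T).val := by
  constructor
  · intro h
    have hA : A.Nodup := (Multiset.nodup_add.1 (h ▸ S.nodup)).1
    refine ⟨⟨A, hA⟩, val_le_iff.1 (h ▸ Multiset.le_add_right A B), rfl, ?_⟩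
    rw [sdiff_val, ← h, add_tsub_cancel_left]
  · rintro ⟨T, hT, rfl, rfl⟩
    rw [sdiff_val, add_tsub_cancel_of_le (val_le_iff.2 hT)]

theorem mem_alternatingForests_iff_of_mem_insertions (hm : m ∈ S)
    (hmax : ∀ x ∈ S, x ≠ m → r x m) (hf : f ∈ insertions m C true g) :
    f ∈ alternatingForests r S ↔ ∃ T ⊆ S.erase m,
      C ∈ alternatingForests (swap r) T ∧ g ∈ alternatingForests r (S.erase m \ T) := by
  have hlabels : f.labels = S.val ↔ ∃ T ⊆ S.erase m,
      C.labels = T.val ∧ g.labels = (S.erase m \ T).val := by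
    rw [labels_of_mem_insertions hf, ← Multiset.cons_erase hm, Multiset.cons_inj_right,
      ← erase_val, add_eq_val_iff]
  have halt {T : Finset α} (hT : T ⊆ S.erase m) (hC : C.labels = T.val)
      (hg : g.labels = (S.erase m \ T).val) :
      f.IsAlternating r ↔ C.IsAlternating (swap r) ∧ g.IsAlternating r := by
    have hlt : ∀ x ∈ S.erase m, r x m := fun x hx =>
      hmax x (mem_of_mem_erase hx) (ne_of_mem_erase hx)
    refine isAlternating_iff_of_mem_insertions hf (fun x hx => ?_) fun x hx => ?_
    · exact hlt x (sdiff_subset (mem_def.2 (hg ▸ hx)))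
    · exact hlt x (hT (mem_def.2 (hC ▸ hx)))
  simp only [mem_alternatingForests, hlabels]
  constructor
  · rintro ⟨⟨T, hT, hC, hg⟩, hf⟩
    obtain ⟨hCalt, hgalt⟩ := (halt hT hC hg).1 hf
    exact ⟨T, hT, ⟨hC, hCalt⟩, hg, hgalt⟩
  · rintro ⟨T, hT, ⟨hC, hCalt⟩, hg, hgalt⟩
    exact ⟨⟨T, hT, hC, hg⟩, (halt hT hC hg).2 ⟨hCalt, hgalt⟩⟩

/- The alternation condition survives the removal of an extremal vertex `m` and imposes nothing on
the place where `m` is put back, apart from the parity of its level. -/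
theorem sum_alternatingForests [Std.Asymm r] {M : Type*} [AddCommMonoid M] (hm : m ∈ S)
    (hmax : ∀ x ∈ S, x ≠ m → r x m) (φ : PlaneForest α → M) :
    ∑ f ∈ alternatingForests r S, φ f =
      ∑ T ∈ (S.erase m).powerset, ∑ C ∈ alternatingForests (swap r) T,
        ∑ g ∈ alternatingForests r (S.erase m \ T), ∑ f ∈ insertions m C true g, φ f := by
  have toFinset_labels {r' : α → α → Prop} {T : Finset α} {C : PlaneForest α}
      (hC : C ∈ alternatingForests r' T) : C.labels.toFinset = T := by
    rw [(mem_alternatingForests.1 hC).1, val_toFinset]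
  simp only [sum_sigma']
  refine sum_nbij' (fun f => ⟨(descendants m f).labels.toFinset, descendants m f, prune m f, f⟩)
    (fun x => x.2.2.2) (fun f hf => ?_) ?_ (fun _ _ => rfl) ?_ (fun _ _ => rfl)
  · have hmem : f ∈ insertions m (descendants m f) true (prune m f) := by
      obtain ⟨hlabels, halt⟩ := mem_alternatingForests.1 hf
      refine mem_insertions_descendants_prune (hlabels ▸ hm) (fun x hx => ?_) halt (by simp)
      exact hmax x (mem_def.2 (hlabels ▸ hx))
    obtain ⟨T, hT, hC, hg⟩ := (mem_alternatingForests_iff_of_mem_insertions hm hmax hmem).1 hf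
    simp only [mem_sigma, mem_powerset, toFinset_labels hC]
    exact ⟨hT, hC, hg, hmem⟩
  · rintro ⟨T, C, g, f⟩ hx
    simp only [mem_sigma, mem_powerset] at hx
    obtain ⟨hT, hC, hg, hf⟩ := hx
    exact (mem_alternatingForests_iff_of_mem_insertions hm hmax hf).2 ⟨T, hT, hC, hg⟩
  · rintro ⟨T, C, g, f⟩ hx
    simp only [mem_sigma, mem_powerset] at hx
    obtain ⟨-, hC, hg, hf⟩ := hx
    have hmg : m ∉ g.labels := notMem_labels_of_mem_alternatingForests (by simp) hg
    obtain ⟨rfl, rfl⟩ := descendants_eq_and_prune_eq_of_mem_insertions hf hmg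
    rw [toFinset_labels hC]

theorem sum_alternatingForests_eq_pow [Std.Asymm r] {φ : PlaneForest α → ℤ} {y : ℤ} (hm : m ∈ S)
    (hmax : ∀ x ∈ S, x ≠ m → r x m)
    (hcard : ∀ T ⊆ S.erase m, (#(alternatingForests (swap r) T) : ℤ) = abelPoly 1 #T)
    (hsum : ∀ U ⊆ S.erase m, ∀ C,
      ∑ g ∈ alternatingForests r U, ∑ f ∈ insertions m C true g, φ f = (y + #U) ^ #U) :
    ∑ f ∈ alternatingForests r S, φ f = (1 + y + #(S.erase m)) ^ #(S.erase m) := by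
  rw [sum_alternatingForests hm hmax, ← sum_powerset_abelPoly_mul_add_pow]
  refine sum_congr rfl fun T hT => ?_
  simp only [hsum _ sdiff_subset, sum_const, nsmul_eq_mul, hcard T (mem_powerset.1 hT)]

end Recursion

theorem sum_card_insertions (hm : m ∉ S) (C : PlaneForest α) :
    ∑ g ∈ alternatingForests r S, #(insertions m C true g) =
      #(alternatingForests r S) * (#S + 1) := by
  rw [sum_const_nat fun g hg => ?_]
  rw [card_insertions (notMem_labels_of_mem_alternatingForests hm hg),
    card_labels_of_mem_alternatingForests hg, if_pos rfl]

theorem card_alternatingForests [IsStrictTotalOrder α r] (S : Finset α) :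
    (#(alternatingForests r S) : ℤ) = abelPoly 1 #S := by
  classical
  induction S using Finset.strongInduction generalizing r with
  | H S ih =>
    obtain rfl | hS := S.eq_empty_or_nonempty
    · rw [alternatingForests_empty, card_singleton]
      rfl
    obtain ⟨m, hm, hmax⟩ := exists_mem_forall_rel (r := r) hS
    have ih_erase {r : α → α → Prop} [IsStrictTotalOrder α r] (U : Finset α)
        (hU : U ⊆ S.erase m) : (#(alternatingForests r U) : ℤ) = abelPoly 1 #U :=
      ih U (hU.trans_ssubset (erase_ssubset hm))
    have hsum (U : Finset α) (hU : U ⊆ S.erase m) (C : PlaneForest α) :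
        ∑ g ∈ alternatingForests r U, ∑ _f ∈ insertions m C true g, (1 : ℤ) =
          (1 + #U) ^ #U := by
      have habel := abelPoly_mul_pow (1 : ℤ) (#U).le_succ
      rw [Nat.add_sub_cancel_left, pow_one, one_mul] at habel
      simp only [sum_const, nsmul_one]
      rw [← Nat.cast_sum, sum_card_insertions (notMem_mono hU (notMem_erase m S)), Nat.cast_mul,
        ih_erase U hU, ← habel, Nat.cast_succ, add_comm (#U : ℤ)]
    have hcount := sum_alternatingForests_eq_pow hm hmax ih_erase hsum
    rw [sum_const, nsmul_one] at hcount
    rw [hcount, ← card_erase_add_one hm, abelPoly, one_mul]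
    push_cast
    ring

/-- The alternating forests with exactly one tree whose vertices are labeled bijectively by `S`. -/
noncomputable def alternatingTrees (r : α → α → Prop) (S : Finset α) : Finset (PlaneForest α) :=
  {f ∈ alternatingForests r S | f.roots.length = 1}

/- Inserting at root level creates a second root, so a tree can only arise from a tree by an
insertion strictly below its root. -/
theorem card_filter_insertions_of_ne_nil (hm : m ∉ g.labels) (hg : g ≠ nil) :
    #{f ∈ insertions m C true g | f.roots.length = 1} =
      if g.roots.length = 1 then g.labels.card - 1 else 0 := by
  classical
  obtain _ | ⟨a, c, s⟩ := g
  · contradiction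
  have hmc : m ∉ c.labels := fun h => hm (by simp [labels, h])
  have hfilter : {f ∈ insertions m C true (cons a c s) | f.roots.length = 1} =
      if s = nil then (insertions m C false c).image (cons a · s) else ∅ := by
    ext f
    rw [mem_filter, mem_insertions_cons]
    constructor
    · rintro ⟨⟨-, rfl⟩ | ⟨c', hc', rfl⟩ | ⟨s', hs', rfl⟩, hf⟩
      · simp [roots] at hf
      · simp_all [roots, roots_eq_nil]
      · have := mem_labels_of_mem_insertions hs'
        simp_all [roots, roots_eq_nil, labels]
    · split_ifs with hs <;> intro hf
      · obtain ⟨c', hc', rfl⟩ := mem_image.1 hf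
        exact ⟨.inr (.inl ⟨c', hc', rfl⟩), by simp [roots, hs]⟩
      · simp at hf
  rw [hfilter]
  by_cases hs : s = nil
  · rw [if_pos hs, card_image_of_injective _ fun c₁ c₂ h => (cons.inj h).2.1, card_insertions hmc]
    simp [hs, roots, labels]
  · simp [hs, roots, roots_eq_nil]

theorem sum_card_filter_insertions {k : ℕ} (hm : m ∉ S) (hS : #S = k + 1) (C : PlaneForest α) :
    ∑ g ∈ alternatingForests r S, #{f ∈ insertions m C true g | f.roots.length = 1} =
      #(alternatingTrees r S) * k := by
  have hslots : ∀ g ∈ alternatingForests r S,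
      #{f ∈ insertions m C true g | f.roots.length = 1} =
        if g.roots.length = 1 then k else 0 := fun g hg => by
    have hlabels := card_labels_of_mem_alternatingForests hg
    have hne : g ≠ nil := by
      rintro rfl
      simp [← hlabels, labels] at hS
    rw [card_filter_insertions_of_ne_nil (notMem_labels_of_mem_alternatingForests hm hg) hne,
      hlabels, hS, Nat.add_sub_cancel]
  rw [sum_congr rfl hslots, ← sum_filter, sum_const, smul_eq_mul, alternatingTrees]

theorem card_alternatingTrees [IsStrictTotalOrder α r] {n : ℕ} (hS : #S = n + 1) :
    #(alternatingTrees r S) = n ^ n := by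
  classical
  induction n using Nat.strong_induction_on generalizing S with
  | _ n ih =>
    have hne : S.Nonempty := card_pos.1 (by omega)
    obtain ⟨m, hm, hmax⟩ := exists_mem_forall_rel (r := r) hne
    have hn : #(S.erase m) = n := by rw [card_erase_of_mem hm, hS, Nat.add_sub_cancel]
    have hsum (U : Finset α) (hU : U ⊆ S.erase m) (C : PlaneForest α) :
        ∑ g ∈ alternatingForests r U, ∑ f ∈ insertions m C true g,
          (if f.roots.length = 1 then 1 else 0 : ℤ) = (-1 + #U) ^ #U := by
      simp only [sum_boole]
      obtain rfl | hUne := U.eq_empty_or_nonempty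
      · simp [alternatingForests_empty, insertions, roots, filter_singleton]
      obtain ⟨k, hk⟩ := Nat.exists_eq_succ_of_ne_zero hUne.card_pos.ne'
      have hkn : k < n := by
        have := card_le_card hU
        omega
      rw [← Nat.cast_sum, sum_card_filter_insertions (notMem_mono hU (notMem_erase m S)) hk,
        ih k hkn hk, hk]
      simp [pow_succ]
    have hcount := sum_alternatingForests_eq_pow hm hmax (fun T _ => card_alternatingForests T) hsum
    rw [sum_boole, ← alternatingTrees, hn, add_neg_cancel, zero_add] at hcount
    exact_mod_cast hcount

end Counting

/-- The list of trees of a forest. -/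
def toTrees : PlaneForest ℕ → List LTree
  | nil => []
  | cons a c s => .node a (toTrees c) :: toTrees s

theorem toTrees_injective : Injective toTrees := by
  intro f
  induction f with
  | nil => rintro (_ | _) <;> simp [toTrees]
  | cons a c s ihc ihs =>
    rintro (_ | ⟨a', c', s'⟩) h
    · simp [toTrees] at h
    · simp only [toTrees, List.cons.injEq, LTree.node.injEq] at h
      rw [h.1.1, ihc h.1.2, ihs h.2]

theorem toTrees_surjective : Surjective toTrees
  | [] => ⟨nil, rfl⟩
  | .node a ts :: l => by
    obtain ⟨c, rfl⟩ := toTrees_surjective ts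
    obtain ⟨s, rfl⟩ := toTrees_surjective l
    exact ⟨cons a c s, rfl⟩

end PlaneForest

namespace LTree

open PlaneForest

variable {a c n : ℕ} {d : Bool} {ts : List LTree} {t : LTree}

theorem labels_node : (node a ts).labels = a :: ts.flatMap labels := by
  rw [labels]
  simp [List.flatMap]

theorem altFrom_node :
    (node c ts).altFrom a d ↔ orient (· < ·) d c a ∧ ∀ t ∈ ts, altFrom c (!d) t := by
  rw [altFrom]
  cases d <;> simp [orient, swap]

theorem valid_iff_coe_labels_eq : t.Valid n ↔ (t.labels : Multiset ℕ) = (Icc 1 (n + 1)).val := by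
  constructor
  · rintro ⟨hnodup, hlength, hmem⟩
    have hcard : #(Icc 1 (n + 1)) ≤ #(⟨t.labels, hnodup⟩ : Finset ℕ) := by
      rw [Nat.card_Icc]
      exact hlength.ge
    exact congrArg Finset.val (eq_of_subset_of_card_le hmem hcard)
  · intro h
    refine ⟨?_, ?_, fun a ha => ?_⟩
    · rw [← Multiset.coe_nodup, h]
      exact (Icc 1 (n + 1)).nodup
    · rw [← Multiset.coe_card, h]
      simp
    · rwa [← Multiset.mem_coe, h] at ha

theorem coe_flatMap_labels_toTrees (f : PlaneForest ℕ) :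
    (f.toTrees.flatMap labels : Multiset ℕ) = f.labels := by
  induction f with
  | nil => rfl
  | cons a c s ihc ihs =>
    rw [toTrees, List.flatMap_cons, ← Multiset.coe_add, labels_node, ← Multiset.cons_coe, ihc, ihs,
      Multiset.cons_add, PlaneForest.labels]

theorem forall_altFrom_toTrees {f : PlaneForest ℕ} :
    (∀ t ∈ f.toTrees, altFrom a d t) ↔
      (∀ x ∈ f.roots, orient (· < ·) d x a) ∧ f.IsAlternating (orient (· < ·) (!d)) := by
  induction f generalizing a d with
  | nil => simp [toTrees, roots, IsAlternating]
  | cons b c s ihc ihs =>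
    simp only [toTrees, roots, IsAlternating, List.forall_mem_cons, altFrom_node, ihc, ihs,
      swap_orient]
    tauto

theorem toTrees_mem_image_singleton_iff {P : LTree → Prop}
    (hP : ∀ a ts, P (node a ts) ↔ ∀ t ∈ ts, altFrom a d t) {f : PlaneForest ℕ} :
    f.toTrees ∈ (fun t => [t]) '' {t | t.Valid n ∧ P t} ↔
      f ∈ alternatingTrees (orient (· < ·) d) (Icc 1 (n + 1)) := by
  rw [alternatingTrees, mem_filter, mem_alternatingForests]
  obtain _ | ⟨a, c, s⟩ := f
  · simp [toTrees, roots]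
  obtain rfl | hs := eq_or_ne s nil
  · have hlabels : (cons a c nil).labels = ((node a c.toTrees).labels : Multiset ℕ) := by
      rw [labels_node, ← Multiset.cons_coe, coe_flatMap_labels_toTrees]
      simp [PlaneForest.labels]
    simp [toTrees, roots, valid_iff_coe_labels_eq, hP, hlabels, forall_altFrom_toTrees,
      IsAlternating, swap_orient]
  · have hs' : s.toTrees ≠ [] := fun h => hs (toTrees_injective h)
    simp [toTrees, roots, roots_eq_nil, hs, hs'.symm]

theorem ncard_setOf_valid_and {P : LTree → Prop}
    (hP : ∀ a ts, P (node a ts) ↔ ∀ t ∈ ts, altFrom a d t) :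
    {t | t.Valid n ∧ P t}.ncard = n ^ n := by
  have himage : (fun t => [t]) '' {t | t.Valid n ∧ P t} =
      toTrees '' alternatingTrees (orient (· < ·) d) (Icc 1 (n + 1)) := by
    ext l
    obtain ⟨f, rfl⟩ := toTrees_surjective l
    rw [toTrees_mem_image_singleton_iff hP, toTrees_injective.mem_set_image, mem_coe]
  rw [← Set.ncard_image_of_injective _ List.singleton_injective, himage,
    Set.ncard_image_of_injective _ toTrees_injective, Set.ncard_coe_finset,
    card_alternatingTrees (n := n) (by simp)]

theorem Valid.not_altI_and_altII (ht : t.Valid n) (hn : 1 ≤ n) : ¬(t.AltI ∧ t.AltII) := by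
  rintro ⟨hI, hII⟩
  obtain ⟨a, _ | ⟨⟨c, us⟩, ts⟩⟩ := t
  · have hlength := ht.2.1
    simp only [labels_node, List.flatMap_nil, List.length_singleton] at hlength
    omega
  · have hlt : c < a := (altFrom_node.1 (hI _ List.mem_cons_self)).1
    have hgt : a < c := (altFrom_node.1 (hII _ List.mem_cons_self)).1
    exact lt_asymm hlt hgt

end LTree

theorem stmt_12 (n : ℕ) (hn : 1 ≤ n) :
    Nat.card {t : LTree // t.Valid n ∧ (t.AltI ∨ t.AltII)} = 2 * n ^ n ∧
    Nat.card {t : LTree // t.Valid n ∧ t.AltI} =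
      Nat.card {t : LTree // t.Valid n ∧ t.AltII} := by
  have hI : {t : LTree | t.Valid n ∧ t.AltI}.ncard = n ^ n :=
    LTree.ncard_setOf_valid_and (d := true) fun _ _ => Iff.rfl
  have hII : {t : LTree | t.Valid n ∧ t.AltII}.ncard = n ^ n :=
    LTree.ncard_setOf_valid_and (d := false) fun _ _ => Iff.rfl
  refine ⟨?_, hI.trans hII.symm⟩
  have hne : n ^ n ≠ 0 := by positivity
  have hdisj : Disjoint {t : LTree | t.Valid n ∧ t.AltI} {t : LTree | t.Valid n ∧ t.AltII} :=
    Set.disjoint_left.2 fun t ht ht' => ht.1.not_altI_and_altII hn ⟨ht.2, ht'.2⟩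
  calc {t : LTree | t.Valid n ∧ (t.AltI ∨ t.AltII)}.ncard
    _ = ({t : LTree | t.Valid n ∧ t.AltI} ∪ {t | t.Valid n ∧ t.AltII}).ncard := by
      simp only [and_or_left, Set.ofPred_or]
    _ = n ^ n + n ^ n := by
      rw [Set.ncard_union_eq hdisj (Set.finite_of_ncard_ne_zero (hI.trans_ne hne))
        (Set.finite_of_ncard_ne_zero (hII.trans_ne hne)), hI, hII]
    _ = 2 * n ^ n := (two_mul _).symm
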